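/- arXiv:cs/0312041 — 4 statements merged into one kernel-verified Lean document; each statement's English description precedes it below -/
import Mathlib

section
/- Let P be a ground choice program whose atom type A and value type V are finite. Then foe(P) has at least one stable model; that is, P has at least one choice model. -/
/-!
The proof avoids the fixpoint computation and takes a maximal consistent set of derivable choices.
Call a set `S` of ordinary and chosen atoms *consistent* if it satisfies the functional dependencies
and every atom of `S` is derivable from the standard rules together with those chosen rules, read
positively, whose head lies in `S` (`Consistent`). The empty set is consistent, and since there are
finitely many atoms there is a maximal consistent `S`. Let `M` be `S` together with all
diffchoice atoms forced by `S` (`withDiff`).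

* `M` is a model of the reduct: if an ordinary or chosen rule of the reduct failed, its head could
  be added to `S` (`Consistent.insert_head`, `Consistent.insert_chosen`), against maximality.
* `M` is below every model `M'` of the reduct: since `S` has no conflicts, the chosen rules with
  head in `S` all survive in the reduct, so derivability gives `S ⊆ M'`, and then the
  diffchoice rules give `M ⊆ M'`.
-/

/-- A ground rule: head, positive body, negative body. -/
structure GroundRule (A : Type) where
  head : A
  pos : Finset A
  neg : Finset A

/-- An interpretation `I` satisfies a ground rule. -/
def satisfiesRule {A : Type} (I : Set A) (r : GroundRule A) : Prop :=
  ((↑r.pos : Set A) ⊆ I ∧ ∀ a ∈ r.neg, a ∉ I) → r.head ∈ I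

/-- `I` is a model of the ground program `P`. -/
def isModel {A : Type} (P : Set (GroundRule A)) (I : Set A) : Prop :=
  ∀ r ∈ P, satisfiesRule I r

/-- The immediate consequence operator `T_P`. -/
def TP {A : Type} (P : Set (GroundRule A)) (I : Set A) : Set A :=
  { a | ∃ r ∈ P, r.head = a ∧ (↑r.pos : Set A) ⊆ I ∧ ∀ b ∈ r.neg, b ∉ I }

/-- The reduct of `P` with respect to `M`. -/
def reduct {A : Type} (P : Set (GroundRule A)) (M : Set A) : Set (GroundRule A) :=
  { r' | ∃ r ∈ P, (∀ b ∈ r.neg, b ∉ M) ∧ r' = ⟨r.head, r.pos, ∅⟩ }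

/-- `M` is the least model of `P`. -/
def isLeastModel {A : Type} (P : Set (GroundRule A)) (M : Set A) : Prop :=
  isModel P M ∧ ∀ M', isModel P M' → M ⊆ M'

/-- `M` is a stable model of `P`: it is the least model of the reduct of `P` w.r.t. `M`. -/
def isStableModel {A : Type} (P : Set (GroundRule A)) (M : Set A) : Prop :=
  isLeastModel (reduct P M) M

/-- Inflationary iteration `F^n(J)` where `F(I) = I ∪ T(I)`. -/
def iterT {A : Type} (T : Set A → Set A) (J : Set A) : ℕ → Set A
  | 0 => J
  | n + 1 => iterT T J n ∪ T (iterT T J n)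

/-- `T^{↑ω}(J) = ⋃ₙ Fⁿ(J)` where `F(I) = I ∪ T(I)`. -/
def Tomega {A : Type} (T : Set A → Set A) (J : Set A) : Set A :=
  ⋃ n, iterT T J n

/-- Atoms of a ground choice program: ordinary atoms, `chosen_r(w)` atoms and
`diffchoice_r(w)` atoms. -/
inductive ChoiceAtom (O V R : Type) (ar : R → ℕ) : Type where
  | ord : O → ChoiceAtom O V R ar
  | chosen : (r : R) → (Fin (ar r) → V) → ChoiceAtom O V R ar
  | diffchoice : (r : R) → (Fin (ar r) → V) → ChoiceAtom O V R ar

/-- A ground choice program. -/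
structure ChoiceProgram (O V R : Type) (ar : R → ℕ) : Type where
  /-- For each index `r`, a finite set of functional dependencies `(X, Y)`,
  pairs of disjoint subsets of `Fin (ar r)`. -/
  FD : (r : R) → Finset (Finset (Fin (ar r)) × Finset (Fin (ar r)))
  FD_disj : ∀ r, ∀ p ∈ FD r, Disjoint p.1 p.2
  /-- The standard rules: ordinary heads, positive bodies of ordinary and chosen atoms. -/
  PD' : Set (GroundRule (ChoiceAtom O V R ar))
  PD'_head : ∀ ru ∈ PD', ∃ o, ru.head = ChoiceAtom.ord o
  PD'_neg : ∀ ru ∈ PD', ru.neg = ∅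
  PD'_pos : ∀ ru ∈ PD', ∀ a ∈ ru.pos, ∀ r w, a ≠ ChoiceAtom.diffchoice r w
  /-- For each index `r`, the instances `(w, b)` of its choice rule: tuple and body. -/
  B : (r : R) → Set ((Fin (ar r) → V) × Finset (ChoiceAtom O V R ar))
  B_pos : ∀ r, ∀ p ∈ B r, ∀ a ∈ p.2, ∀ r' w, a ≠ ChoiceAtom.diffchoice r' w

variable {O V R : Type} {ar : R → ℕ}

/-- Tuples `w, w'` of index `r` conflict: for some FD `(X, Y)` they agree
on every coordinate of `X` and differ on some coordinate of `Y`. -/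
def conflicts (P : ChoiceProgram O V R ar) (r : R) (w w' : Fin (ar r) → V) : Prop :=
  ∃ p ∈ P.FD r, (∀ i ∈ p.1, w i = w' i) ∧ ∃ i ∈ p.2, w i ≠ w' i

/-- The chosen rules of `foe(P)`. -/
def chosenRules (P : ChoiceProgram O V R ar) : Set (GroundRule (ChoiceAtom O V R ar)) :=
  { ru | ∃ r, ∃ p ∈ P.B r,
      ru = ⟨ChoiceAtom.chosen r p.1, p.2, {ChoiceAtom.diffchoice r p.1}⟩ }

/-- The diffchoice rules of `foe(P)`. -/
def diffRules (P : ChoiceProgram O V R ar) : Set (GroundRule (ChoiceAtom O V R ar)) :=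
  { ru | ∃ r w w', conflicts P r w w' ∧
      ru = ⟨ChoiceAtom.diffchoice r w, {ChoiceAtom.chosen r w'}, ∅⟩ }

/-- The first-order equivalent `foe(P)` of a choice program. -/
def foe (P : ChoiceProgram O V R ar) : Set (GroundRule (ChoiceAtom O V R ar)) :=
  P.PD' ∪ chosenRules P ∪ diffRules P

/-- `S` satisfies `FD_P`: no two chosen atoms of `S` have conflicting tuples. -/
def satFD (P : ChoiceProgram O V R ar) (S : Set (ChoiceAtom O V R ar)) : Prop :=
  ∀ r w w', ChoiceAtom.chosen r w ∈ S → ChoiceAtom.chosen r w' ∈ S →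
    ¬ conflicts P r w w'

/-- `T_{P_C}`: immediate consequence operator of the chosen rules. -/
def TPC (P : ChoiceProgram O V R ar) : Set (ChoiceAtom O V R ar) → Set (ChoiceAtom O V R ar) :=
  TP (chosenRules P)

/-- `T_{P_D}`: immediate consequence operator of all other rules of `foe(P)`. -/
def TPD (P : ChoiceProgram O V R ar) : Set (ChoiceAtom O V R ar) → Set (ChoiceAtom O V R ar) :=
  TP (P.PD' ∪ diffRules P)

/-- `Γ_P(I)`: `{∅}` if `T_{P_C}(I) \ I = ∅`, otherwise all nonempty
`ΔC ⊆ T_{P_C}(I) \ I` such that `I ∪ ΔC` satisfies `FD_P`. -/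
def GammaP (P : ChoiceProgram O V R ar) (I : Set (ChoiceAtom O V R ar)) :
    Set (Set (ChoiceAtom O V R ar)) :=
  { DC | (TPC P I \ I = ∅ ∧ DC = ∅) ∨
         ((TPC P I \ I).Nonempty ∧ DC.Nonempty ∧ DC ⊆ TPC P I \ I ∧ satFD P (I ∪ DC)) }

/-- The nondeterministic immediate consequence operator `Ψ_P`. -/
def PsiP (P : ChoiceProgram O V R ar) (I : Set (ChoiceAtom O V R ar)) :
    Set (Set (ChoiceAtom O V R ar)) :=
  { J | ∃ DC ∈ GammaP P I, J = Tomega (TPD P) (I ∪ DC) ∪ DC }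

/-- An inflationary choice fixpoint computation for `P`. -/
def isChoiceComputation (P : ChoiceProgram O V R ar)
    (Iseq : ℕ → Set (ChoiceAtom O V R ar)) : Prop :=
  Iseq 0 = ∅ ∧ ∀ n, Iseq (n + 1) ∈ PsiP P (Iseq n)

theorem conflicts_symm {P : ChoiceProgram O V R ar} {r : R} {w w' : Fin (ar r) → V}
    (h : conflicts P r w w') : conflicts P r w' w := by
  obtain ⟨p, hp, hX, i, hi, hne⟩ := h
  exact ⟨p, hp, fun j hj => (hX j hj).symm, i, hi, hne.symm⟩

theorem not_conflicts_self {P : ChoiceProgram O V R ar} {r : R} {w : Fin (ar r) → V} :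
    ¬ conflicts P r w w := by
  rintro ⟨p, hp, hX, i, hi, hne⟩
  exact hne rfl

/-- `X` is closed under the standard rules and under the positive parts of those chosen rules whose
head lies in `S`. -/
def ClosedFor (P : ChoiceProgram O V R ar) (S X : Set (ChoiceAtom O V R ar)) : Prop :=
  (∀ ru ∈ P.PD', (↑ru.pos : Set _) ⊆ X → ru.head ∈ X) ∧
  ∀ r, ∀ p ∈ P.B r, ChoiceAtom.chosen r p.1 ∈ S → (↑p.2 : Set _) ⊆ X →
    ChoiceAtom.chosen r p.1 ∈ X

/-- A set of non-diffchoice atoms that satisfies the functional dependencies and is derivable by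
the standard rules and the chosen rules with head in the set. Derivability is expressed
impredicatively: the set is contained in every set closed under these rules. -/
structure Consistent (P : ChoiceProgram O V R ar) (S : Set (ChoiceAtom O V R ar)) : Prop where
  noDiff : ∀ r w, ChoiceAtom.diffchoice r w ∉ S
  fd : satFD P S
  derivable : ∀ X, ClosedFor P S X → S ⊆ X

/-- `S` together with the diffchoice atoms that the diffchoice rules derive from it. -/
def withDiff (P : ChoiceProgram O V R ar) (S : Set (ChoiceAtom O V R ar)) :
    Set (ChoiceAtom O V R ar) :=
  S ∪ { a | ∃ r w w', conflicts P r w w' ∧ ChoiceAtom.chosen r w' ∈ S ∧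
    a = ChoiceAtom.diffchoice r w }

theorem ClosedFor.mono {P : ChoiceProgram O V R ar} {S S' X : Set (ChoiceAtom O V R ar)}
    (hS : S ⊆ S') (h : ClosedFor P S' X) : ClosedFor P S X :=
  ⟨h.1, fun r p hp hc => h.2 r p hp (hS hc)⟩

theorem consistent_empty (P : ChoiceProgram O V R ar) : Consistent P ∅ :=
  ⟨fun _ _ h => h, fun _ _ _ h => h.elim, fun _ _ => Set.empty_subset _⟩

theorem Consistent.insert_head {P : ChoiceProgram O V R ar} {S : Set (ChoiceAtom O V R ar)}
    (hS : Consistent P S) {ru : GroundRule (ChoiceAtom O V R ar)} (hru : ru ∈ P.PD')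
    (hpos : (↑ru.pos : Set _) ⊆ S) : Consistent P (insert ru.head S) := by
  obtain ⟨o, ho⟩ := P.PD'_head ru hru
  refine ⟨fun r w h => ?_, fun r w w' h h' => ?_, fun X hX => ?_⟩
  · rw [ho] at h
    exact hS.noDiff r w (h.resolve_left (by simp))
  · rw [ho] at h h'
    exact hS.fd r w w' (h.resolve_left (by simp)) (h'.resolve_left (by simp))
  · have hSX := hS.derivable X (hX.mono (Set.subset_insert _ _))
    exact Set.insert_subset (hX.1 ru hru (hpos.trans hSX)) hSX

theorem Consistent.insert_chosen {P : ChoiceProgram O V R ar} {S : Set (ChoiceAtom O V R ar)}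
    (hS : Consistent P S) {r : R} {p : (Fin (ar r) → V) × Finset (ChoiceAtom O V R ar)}
    (hp : p ∈ P.B r) (hpos : (↑p.2 : Set _) ⊆ S)
    (hfree : ∀ w', ChoiceAtom.chosen r w' ∈ S → ¬ conflicts P r p.1 w') :
    Consistent P (insert (ChoiceAtom.chosen r p.1) S) := by
  refine ⟨fun r' w h => ?_, fun r' w w' h h' hc => ?_, fun X hX => ?_⟩
  · exact hS.noDiff r' w (h.resolve_left (by simp))
  · rcases h with h | h <;> rcases h' with h' | h'
    · cases h
      cases h'
      exact not_conflicts_self hc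
    · cases h
      exact hfree _ h' hc
    · cases h'
      exact hfree _ h (conflicts_symm hc)
    · exact hS.fd r' w w' h h' hc
  · have hSX := hS.derivable X (hX.mono (Set.subset_insert _ _))
    exact Set.insert_subset (hX.2 r p hp (Set.mem_insert _ _) (hpos.trans hSX)) hSX

theorem mem_of_mem_withDiff {P : ChoiceProgram O V R ar} {S : Set (ChoiceAtom O V R ar)}
    {a : ChoiceAtom O V R ar} (ha : a ∈ withDiff P S)
    (hnd : ∀ r w, a ≠ ChoiceAtom.diffchoice r w) : a ∈ S := by
  rcases ha with h | ⟨r, w, w', -, -, h⟩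
  · exact h
  · exact absurd h (hnd r w)

theorem Consistent.diffchoice_mem_withDiff {P : ChoiceProgram O V R ar}
    {S : Set (ChoiceAtom O V R ar)} (hS : Consistent P S) {r : R} {w : Fin (ar r) → V} :
    ChoiceAtom.diffchoice r w ∈ withDiff P S ↔
      ∃ w', conflicts P r w w' ∧ ChoiceAtom.chosen r w' ∈ S := by
  constructor
  · rintro (h | ⟨r', v, w', hc, hm, h⟩)
    · exact absurd h (hS.noDiff r w)
    · cases h
      exact ⟨w', hc, hm⟩
  · rintro ⟨w', hc, hm⟩
    exact Or.inr ⟨r, w, w', hc, hm, rfl⟩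

/-- a ground choice program with finite atom and value types has
at least one choice model, i.e. `foe(P)` has at least one stable model. -/
theorem exists_choice_model {O V R : Type} {ar : R → ℕ}
    [Finite R] [Finite V] [Finite (ChoiceAtom O V R ar)]
    (P : ChoiceProgram O V R ar) :
    ∃ M : Set (ChoiceAtom O V R ar), isStableModel (foe P) M := by
  obtain ⟨S, hS, hmax⟩ :=
    (Set.toFinite { S | Consistent P S }).exists_maximal ⟨∅, consistent_empty P⟩
  have hins : ∀ a, Consistent P (insert a S) → a ∈ S := fun a ha =>
    hmax ha (Set.subset_insert a S) (Set.mem_insert a S)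
  refine ⟨withDiff P S, ?_, ?_⟩
  · rintro _ ⟨ru, hru, hneg, rfl⟩ ⟨hpos, -⟩
    rcases hru with (hru | ⟨r, p, hp, rfl⟩) | ⟨r, w, w', hc, rfl⟩
    · exact Or.inl (hins ru.head (hS.insert_head hru fun a ha =>
        mem_of_mem_withDiff (hpos ha) (P.PD'_pos ru hru a ha)))
    · refine Or.inl (hins _ (hS.insert_chosen hp (fun a ha =>
        mem_of_mem_withDiff (hpos ha) (P.B_pos r p hp a ha)) fun w' hw' hc => ?_))
      exact hneg _ (Finset.mem_singleton_self _) (hS.diffchoice_mem_withDiff.2 ⟨w', hc, hw'⟩)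
    · exact hS.diffchoice_mem_withDiff.2
        ⟨w', hc, mem_of_mem_withDiff (hpos (by simp)) (by simp)⟩
  · intro M' hM'
    have hrule : ∀ ru ∈ foe P, (∀ b ∈ ru.neg, b ∉ withDiff P S) →
        (↑ru.pos : Set _) ⊆ M' → ru.head ∈ M' := fun ru hru hneg hpos =>
      hM' ⟨ru.head, ru.pos, ∅⟩ ⟨ru, hru, hneg, rfl⟩ ⟨hpos, by simp⟩
    have hSM : S ⊆ M' := by
      refine hS.derivable M' ⟨fun ru hru => ?_, fun r p hp hmem => ?_⟩
      · exact hrule ru (Or.inl (Or.inl hru)) (by simp [P.PD'_neg ru hru])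
      -- The head is in the conflict-free set `S`, so the rule survives in the reduct.
      · refine hrule _ (Or.inl (Or.inr ⟨r, p, hp, rfl⟩)) fun b hb hbM => ?_
        rw [Finset.mem_singleton] at hb
        subst hb
        obtain ⟨w', hc, hw'⟩ := hS.diffchoice_mem_withDiff.1 hbM
        exact hS.fd r _ _ hmem hw' hc
    rintro a (ha | ⟨r, w, w', hc, hm, rfl⟩)
    · exact hSM ha
    · exact hrule _ (Or.inr ⟨r, w, w', hc, rfl⟩) (by simp) (by simpa using hSM hm)
end

section
/- Let P be a ground choice program and let M be any stable model of foe(P). Then the set of chosen atoms contained in M satisfies FD_P; that is, for every index r and every (X, Y) ∈ FD_r, any two atoms chosen_r(w), chosen_r(w') ∈ M whose tuples agree on every coordinate in X also agree on every coordinate in Y. -/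
variable {O V R : Type} {ar : R → ℕ}

/-- Every atom of a least model is the head of some rule: otherwise removing the atom would leave a
smaller model. The program has to be positive, since removing an atom may activate a rule that
negates it. -/
theorem isLeastModel.exists_head {A : Type} {Q : Set (GroundRule A)} {M : Set A}
    (hQ : ∀ ru ∈ Q, ru.neg = ∅) (hM : isLeastModel Q M) {a : A} (ha : a ∈ M) :
    ∃ ru ∈ Q, ru.head = a := by
  by_contra! hne
  have hmodel : isModel Q (M \ {a}) := by
    rintro ru hru ⟨hpos, -⟩
    exact ⟨hM.1 ru hru ⟨hpos.trans Set.sdiff_subset, by simp [hQ ru hru]⟩, hne ru hru⟩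
  exact (hM.2 _ hmodel ha).2 rfl

theorem diffchoice_notMem_of_chosen_mem {O V R : Type} {ar : R → ℕ}
    {P : ChoiceProgram O V R ar} {M : Set (ChoiceAtom O V R ar)}
    (hM : isStableModel (foe P) M) {r : R} {w : Fin (ar r) → V}
    (hw : ChoiceAtom.chosen r w ∈ M) : ChoiceAtom.diffchoice r w ∉ M := by
  have hpos : ∀ ru ∈ reduct (foe P) M, ru.neg = ∅ := by
    rintro _ ⟨_, -, -, rfl⟩
    rfl
  obtain ⟨_, ⟨ru, hru, hneg, rfl⟩, hhead⟩ := isLeastModel.exists_head hpos hM hw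
  rcases hru with (hD | ⟨r', p, -, rfl⟩) | ⟨r', v, v', -, rfl⟩
  · obtain ⟨o, ho⟩ := P.PD'_head ru hD
    simp [ho] at hhead
  · simp only [ChoiceAtom.chosen.injEq] at hhead
    obtain ⟨rfl, h⟩ := hhead
    obtain rfl := eq_of_heq h
    exact hneg _ (Finset.mem_singleton_self _)
  · simp at hhead

/-- the chosen atoms of any stable model of `foe(P)` satisfy
`FD_P`: for every index `r` and FD `(X,Y) ∈ FD_r`, any two chosen tuples in `M`
agreeing on every coordinate of `X` agree on every coordinate of `Y`. -/
theorem stable_model_satisfies_FD {O V R : Type} {ar : R → ℕ}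
    (P : ChoiceProgram O V R ar) (M : Set (ChoiceAtom O V R ar))
    (hM : isStableModel (foe P) M) :
    satFD P M ∧
    ∀ (r : R), ∀ p ∈ P.FD r, ∀ w w' : Fin (ar r) → V,
      ChoiceAtom.chosen r w ∈ M → ChoiceAtom.chosen r w' ∈ M →
      (∀ i ∈ p.1, w i = w' i) → ∀ i ∈ p.2, w i = w' i := by
  have hFD : satFD P M := by
    intro r w w' hw hw' hc
    refine diffchoice_notMem_of_chosen_mem hM hw ?_
    exact hM.1 ⟨ChoiceAtom.diffchoice r w, {ChoiceAtom.chosen r w'}, ∅⟩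
      ⟨_, Or.inr ⟨r, w, w', hc, rfl⟩, by simp, rfl⟩ ⟨by simpa using hw', by simp⟩
  refine ⟨hFD, fun r p hp w w' hw hw' hX i hi => ?_⟩
  by_contra hne
  exact hFD r w w' hw hw' ⟨p, hp, hX, i, hi, hne⟩
end

section
/- Let P be a ground choice program and let M be any stable model of foe(P). Then for every index r and tuple w, the atom diffchoice_r(w) belongs to M if and only if there exists a tuple w' conflicting with w such that chosen_r(w') ∈ M. (Hence a negative goal on diffchoice_r(w) can be evaluated by checking the chosen_r atoms of M directly, without materializing diffchoice.) -/
variable {O V R : Type} {ar : R → ℕ}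

/-- Stable models are supported; only the support of the positive body is recorded. -/
theorem stable_supported {A : Type} {P : Set (GroundRule A)} {M : Set A}
    (hM : isStableModel P M) {a : A} (ha : a ∈ M) :
    ∃ ru ∈ P, ru.head = a ∧ (↑ru.pos : Set A) ⊆ M := by
  by_contra hcon
  have hmod : isModel (reduct P M) (M \ {a}) := by
    rintro r' hr' ⟨hpos, -⟩
    have hposM : (↑r'.pos : Set A) ⊆ M := hpos.trans Set.sdiff_subset
    obtain ⟨ru, hru, hneg, rfl⟩ := hr'
    refine ⟨hM.1 _ ⟨ru, hru, hneg, rfl⟩ ⟨hposM, by simp⟩, ?_⟩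
    intro hhead
    exact hcon ⟨ru, hru, hhead, hposM⟩
  exact (hM.2 _ hmod ha).2 rfl

/-- in any stable model `M` of `foe(P)`, `diffchoice_r(w) ∈ M` iff
some tuple `w'` conflicting with `w` has `chosen_r(w') ∈ M`. -/
theorem diffchoice_mem_iff {O V R : Type} {ar : R → ℕ}
    (P : ChoiceProgram O V R ar) (M : Set (ChoiceAtom O V R ar))
    (hM : isStableModel (foe P) M) :
    ∀ (r : R) (w : Fin (ar r) → V),
      ChoiceAtom.diffchoice r w ∈ M ↔
        ∃ w', conflicts P r w w' ∧ ChoiceAtom.chosen r w' ∈ M := by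
  intro r w
  constructor
  · intro h
    obtain ⟨ru, hru, hhead, hpos⟩ := stable_supported hM h
    rcases hru with (hru | ⟨r', p, -, rfl⟩) | ⟨r', v, v', hc, rfl⟩
    · obtain ⟨o, ho⟩ := P.PD'_head ru hru
      rw [ho] at hhead
      cases hhead
    · cases hhead
    · cases hhead
      exact ⟨v', hc, hpos (by simp)⟩
  · rintro ⟨w', hc, hw'⟩
    have hrule : (⟨ChoiceAtom.diffchoice r w, {ChoiceAtom.chosen r w'}, ∅⟩ :
        GroundRule (ChoiceAtom O V R ar)) ∈ reduct (foe P) M :=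
      ⟨_, Or.inr ⟨r, w, w', hc, rfl⟩, by simp, rfl⟩
    exact hM.1 _ hrule ⟨by simpa using hw', by simp⟩
end

section
/- Let P be a ground choice program and let T_{P'_C} denote the immediate consequence operator of the chosen rules of foe(P) with their negative bodies removed (i.e. with neg = ∅ instead of {diffchoice_r(w)}). Suppose the interpretation I is such that for every r and w, diffchoice_r(w) ∈ I if and only if some chosen_r(w') ∈ I has w' conflicting with w. Then for every set ΔC of atoms: (∅ ⊊ ΔC ⊆ T_{P_C}(I) \ I and I ∪ ΔC satisfies FD_P) holds if and only if (∅ ⊊ ΔC ⊆ T_{P'_C}(I) \ I and I ∪ ΔC satisfies FD_P) holds. In particular T_{P'_C} can replace T_{P_C} in the definition of Γ_P(I). -/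
variable {O V R : Type} {ar : R → ℕ}

/-- The chosen rules of `foe(P)` with their negative bodies removed. -/
def chosenRulesNoNeg (P : ChoiceProgram O V R ar) :
    Set (GroundRule (ChoiceAtom O V R ar)) :=
  { ru | ∃ r, ∃ p ∈ P.B r, ru = ⟨ChoiceAtom.chosen r p.1, p.2, ∅⟩ }

/-- if `I` contains `diffchoice_r(w)` exactly when some conflicting
`chosen_r(w')` is in `I`, then `T_{P'_C}` can replace `T_{P_C}` in the
definition of `Γ_P(I)`. -/
theorem TPC_noneg_replacement {O V R : Type} {ar : R → ℕ}
    (P : ChoiceProgram O V R ar) (I : Set (ChoiceAtom O V R ar))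
    (hI : ∀ (r : R) (w : Fin (ar r) → V),
      ChoiceAtom.diffchoice r w ∈ I ↔
        ∃ w', conflicts P r w w' ∧ ChoiceAtom.chosen r w' ∈ I) :
    ∀ DC : Set (ChoiceAtom O V R ar),
      (DC.Nonempty ∧ DC ⊆ TP (chosenRules P) I \ I ∧ satFD P (I ∪ DC)) ↔
      (DC.Nonempty ∧ DC ⊆ TP (chosenRulesNoNeg P) I \ I ∧ satFD P (I ∪ DC)) := by
  intro DC
  refine and_congr_right fun _ => and_congr_left fun hFD => ⟨fun h a ha => ?_, fun h a ha => ?_⟩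
  · obtain ⟨⟨ru, ⟨r, p, hp, rfl⟩, hhead, hpos, -⟩, haI⟩ := h ha
    exact ⟨⟨_, ⟨r, p, hp, rfl⟩, hhead, hpos, by simp⟩, haI⟩
  · obtain ⟨⟨ru, ⟨r, p, hp, rfl⟩, rfl, hpos, -⟩, haI⟩ := h ha
    refine ⟨⟨_, ⟨r, p, hp, rfl⟩, rfl, hpos, fun b hb hbI => ?_⟩, haI⟩
    obtain rfl := Finset.mem_singleton.mp hb
    -- A blocked chosen atom conflicts with one already in `I`, contradicting `FD_P` on `I ∪ DC`.
    obtain ⟨w', hconf, hw'⟩ := (hI r p.1).mp hbI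
    exact hFD r p.1 w' (Or.inr ha) (Or.inl hw') hconf
end
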